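/- Let 0 ≤ s < m and 0 ≤ r < n be integers, and let S be a uniformly random n-element subset of {1,…,m+n}. For integers i, k with m−s ≤ i ≤ m and n−r ≤ k ≤ n, the probability that A_s(S) = k and B_r(S) = i equals C(m+n−r−i−1, n−r−1) · C(m+n−s−k−1, m−s−1) · C(k+i−m−n+s+r, k−n+r) / C(m+n, n), where C(a, b) denotes the binomial coefficient. -/

import Mathlib

open Finset

/-- The `j`-th smallest element (1-indexed) of a finite set of naturals. -/
def nthSmallest (T : Finset ℕ) (j : ℕ) : ℕ :=
  (T.sort (· ≤ ·)).getD (j - 1) 0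

/-- Exceedance statistic: for an `n`-element subset `S` of `{1,…,m+n}` (the ranks of the
`Y`-sample), the number of elements of `S` greater than `X_{(m-s)}`, the `(m-s)`-th smallest
element of the complement of `S`. -/
def Aexc (m n s : ℕ) (S : Finset ℕ) : ℕ :=
  (S.filter fun y => nthSmallest (Finset.Icc 1 (m + n) \ S) (m - s) < y).card

/-- Precedence statistic: the number of elements of the complement of `S` smaller than
`Y_{(r+1)}`, the `(r+1)`-th smallest element of `S`. -/
def Bprec (m n r : ℕ) (S : Finset ℕ) : ℕ :=
  ((Finset.Icc 1 (m + n) \ S).filter fun x => x < nthSmallest S (r + 1)).card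

/-!
Writing `X_(j)` and `Y_(j)` for the order statistics, `A_s + X_(m-s) = m + n - s` and
`B_r + r + 1 = Y_(r+1)`, since each counts the elements on one side of an order statistic whose rank
in its own sample is known. So `A_s = k` and `B_r = i` say that `p = m + n - s - k` is missing from
`S` with `n - k` elements of `S` below it, and that `q = r + i + 1` lies in `S` with `r` elements of
`S` below it. In the given range `p < q`, so `S` is any choice of `n - k` elements below `p`,
`k + r - n` elements strictly between `p` and `q`, and `n - r - 1` elements above `q`.
-/

section Blocks

variable {α ι : Type*} [DecidableEq α] [Fintype ι]

theorem biUnion_inter_eq_of_subset {B : ι → Finset α} (hB : Pairwise (Function.onFun Disjoint B))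
    {g : ι → Finset α} (hg : ∀ i, g i ⊆ B i) (i : ι) : univ.biUnion g ∩ B i = g i := by
  ext x
  simp only [mem_inter, mem_biUnion, mem_univ, true_and]
  refine ⟨fun ⟨⟨j, hxj⟩, hxi⟩ => ?_, fun hx => ⟨⟨i, hx⟩, hg i hx⟩⟩
  obtain rfl : j = i := by
    by_contra hji
    exact disjoint_left.mp (hB hji) (hg j hxj) hxi
  exact hxj

theorem card_powerset_biUnion_filter_card_inter {B : ι → Finset α}
    (hB : Pairwise (Function.onFun Disjoint B)) (c : ι → ℕ) :
    #{S ∈ (univ.biUnion B).powerset | ∀ i, #(S ∩ B i) = c i} = ∏ i, (#(B i)).choose (c i) := by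
  classical
  simp only [← card_powersetCard, ← Fintype.card_piFinset]
  refine card_nbij' (fun S i => S ∩ B i) (fun g => univ.biUnion g) ?_ ?_ ?_ ?_
  · intro S hS
    simp only [coe_filter, Set.mem_ofPred_eq, mem_powerset] at hS
    simpa [mem_powersetCard] using hS.2
  · intro g hg
    simp only [mem_coe, Fintype.mem_piFinset, mem_powersetCard] at hg
    simp only [coe_filter, Set.mem_ofPred_eq, mem_powerset,
      biUnion_inter_eq_of_subset hB fun i => (hg i).1]
    exact ⟨biUnion_mono fun i _ => (hg i).1, fun i => (hg i).2⟩
  · intro S hS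
    simp only [coe_filter, Set.mem_ofPred_eq, mem_powerset] at hS
    simpa only [← inter_biUnion, inter_eq_left] using hS.1
  · intro g hg
    simp only [mem_coe, Fintype.mem_piFinset, mem_powersetCard] at hg
    exact funext <| biUnion_inter_eq_of_subset hB fun i => (hg i).1

end Blocks

theorem card_filter_add_card_sdiff_filter {α : Type*} [DecidableEq α] {S T : Finset α} (hST : S ⊆ T)
    (P : α → Prop) [DecidablePred P] : #{x ∈ S | P x} + #{x ∈ T \ S | P x} = #{x ∈ T | P x} := by
  rw [← card_union_of_disjoint (disjoint_filter_filter disjoint_sdiff), ← filter_union,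
    union_sdiff_of_subset hST]

section LinearOrder

variable {α : Type*} [LinearOrder α]

theorem card_filter_lt_add_card_filter_gt (S : Finset α) (t : α) :
    #{x ∈ S | x < t} + (if t ∈ S then 1 else 0) + #{x ∈ S | t < x} = #S := by
  have hge : {x ∈ S | ¬ x < t} = {x ∈ S | x = t} ∪ {x ∈ S | t < x} := by
    rw [← filter_or]
    exact filter_congr fun x _ => by rw [not_lt, le_iff_eq_or_lt, eq_comm]
  have hdisj : Disjoint {x ∈ S | x = t} {x ∈ S | t < x} :=
    disjoint_filter.mpr fun x _ hxt htx => htx.ne' hxt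
  rw [← card_filter_add_card_filter_not (s := S) (· < t), hge, card_union_of_disjoint hdisj,
    filter_eq', apply_ite card, card_singleton, card_empty, add_assoc]

theorem card_filter_lt_of_lt (S : Finset α) {p q : α} (hpq : p < q) :
    #{x ∈ S | x < q} =
      #{x ∈ S | x < p} + (if p ∈ S then 1 else 0) + #{x ∈ S | p < x ∧ x < q} := by
  have hlt : {x ∈ S | x < q ∧ x < p} = {x ∈ S | x < p} :=
    filter_congr fun x _ => and_iff_right_of_imp fun hxp => hxp.trans hpq
  simpa only [filter_filter, mem_filter, hpq, and_true, hlt, and_comm (b := p < _)] using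
    (card_filter_lt_add_card_filter_gt {x ∈ S | x < q} p).symm

/-- The partition of a finite set `T` cut by two of its elements `p < q`: the part below `p`, `{p}`,
the part strictly between `p` and `q`, `{q}`, and the part above `q`, in this order. -/
def cutBlocks (T : Finset α) (p q : α) : Fin 5 → Finset α :=
  ![{x ∈ T | x < p}, {p}, {x ∈ T | p < x ∧ x < q}, {q}, {x ∈ T | q < x}]

theorem pairwise_disjoint_cutBlocks (T : Finset α) {p q : α} (hpq : p < q) :
    Pairwise (Function.onFun Disjoint (cutBlocks T p q)) := by
  have hlt : ∀ i j, i < j → ∀ x ∈ cutBlocks T p q i, ∀ y ∈ cutBlocks T p q j, x < y := by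
    simp only [cutBlocks, Fin.forall_fin_succ, Matrix.cons_val_zero, Matrix.cons_val_succ,
      IsEmpty.forall_iff, mem_filter, mem_singleton]
    grind
  exact (pairwise_disjoint_on _).mpr fun i j hij =>
    disjoint_left.mpr fun x hxi hxj => (hlt i j hij x hxi x hxj).false

variable {T : Finset α} {p q : α}

theorem biUnion_cutBlocks (hp : p ∈ T) (hq : q ∈ T) : univ.biUnion (cutBlocks T p q) = T := by
  ext x
  have hmem : x ∈ univ.biUnion (cutBlocks T p q) ↔
      (x ∈ T ∧ x < p) ∨ x = p ∨ (x ∈ T ∧ p < x ∧ x < q) ∨ x = q ∨ (x ∈ T ∧ q < x) := by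
    simp [cutBlocks, Fin.exists_fin_succ]
  rw [hmem]
  grind

theorem card_inter_cutBlocks_iff {S : Finset α} (hST : S ⊆ T) (hpq : p < q) {n r a : ℕ} (ha : a ≤ r)
    (hr : r < n) :
    (∀ j, #(S ∩ cutBlocks T p q j) = ![a, 0, r - a, 1, n - r - 1] j) ↔
      #S = n ∧ (p ∉ S ∧ #{x ∈ S | x < p} = a) ∧ q ∈ S ∧ #{x ∈ S | x < q} = r := by
  have hbelow := card_filter_lt_of_lt S hpq
  have htotal := card_filter_lt_add_card_filter_gt S q
  have hprofile : (∀ j, #(S ∩ cutBlocks T p q j) = ![a, 0, r - a, 1, n - r - 1] j) ↔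
      #{x ∈ S | x < p} = a ∧ p ∉ S ∧ #{x ∈ S | p < x ∧ x < q} = r - a ∧ q ∈ S ∧
        #{x ∈ S | q < x} = n - r - 1 := by
    simp [Fin.forall_fin_succ, cutBlocks, inter_filter, inter_eq_left.mpr hST, inter_singleton,
      apply_ite card]
  rw [hprofile]
  grind

theorem card_powersetCard_filter_notMem_mem (hp : p ∈ T) (hq : q ∈ T) (hpq : p < q) {n r a : ℕ}
    (ha : a ≤ r) (hr : r < n) :
    #{S ∈ T.powersetCard n | (p ∉ S ∧ #{x ∈ S | x < p} = a) ∧ q ∈ S ∧ #{x ∈ S | x < q} = r} =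
      (#{x ∈ T | x < p}).choose a * (#{x ∈ T | p < x ∧ x < q}).choose (r - a) *
        (#{x ∈ T | q < x}).choose (n - r - 1) := by
  have hcount := card_powerset_biUnion_filter_card_inter (pairwise_disjoint_cutBlocks T hpq)
    ![a, 0, r - a, 1, n - r - 1]
  rw [biUnion_cutBlocks hp hq] at hcount
  convert hcount using 1
  · congr 1
    ext S
    simp only [mem_filter, mem_powersetCard, mem_powerset, and_assoc]
    refine and_congr_right fun hST => ?_
    simp only [card_inter_cutBlocks_iff hST hpq ha hr, and_assoc]
  · simp [Fin.prod_univ_five, cutBlocks]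

end LinearOrder

theorem filter_lt_Icc {α : Type*} [LinearOrder α] [LocallyFiniteOrder α] {a b t : α} (htb : t ≤ b) :
    {x ∈ Icc a b | x < t} = Ico a t := by
  ext x
  simp only [mem_filter, mem_Icc, mem_Ico, and_assoc]
  exact and_congr_right fun _ => and_iff_right_of_imp fun hxt => hxt.le.trans htb

theorem card_powersetCard_Icc_filter_notMem_mem {N p q n r a : ℕ} (hp : 1 ≤ p) (hpq : p < q)
    (hq : q ≤ N) (ha : a ≤ r) (hr : r < n) :
    #{S ∈ (Icc 1 N).powersetCard n |
        (p ∉ S ∧ #{x ∈ S | x < p} = a) ∧ q ∈ S ∧ #{x ∈ S | x < q} = r} =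
      (p - 1).choose a * (q - p - 1).choose (r - a) * (N - q).choose (n - r - 1) := by
  have hbetween : {x ∈ Icc 1 N | p < x ∧ x < q} = Ioo p q := by
    ext x
    simp only [mem_filter, mem_Icc, mem_Ioo]
    lia
  have habove : {x ∈ Icc 1 N | q < x} = Ioc q N := by
    ext x
    simp only [mem_filter, mem_Icc, mem_Ioc]
    lia
  rw [card_powersetCard_filter_notMem_mem (mem_Icc.mpr (by lia)) (mem_Icc.mpr (by lia)) hpq ha hr,
    filter_lt_Icc (hpq.le.trans hq), hbetween, habove, Nat.card_Ico, Nat.card_Ioo,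
    Nat.card_Ioc]

theorem nthSmallest_eq_nth (T : Finset ℕ) (j : ℕ) : nthSmallest T j = Nat.nth (· ∈ T) (j - 1) := by
  have hT : (Set.ofPred (· ∈ T)).Finite := T.finite_toSet
  rw [nthSmallest, Nat.nth_eq_getD_sort hT, show hT.toFinset = T from finite_toSet_toFinset T]

theorem card_filter_lt_eq_count (T : Finset ℕ) (t : ℕ) :
    #{x ∈ T | x < t} = Nat.count (· ∈ T) t := by
  rw [Nat.count_eq_card_filter_range]
  congr 1
  ext x
  simp [and_comm]

theorem nthSmallest_eq_iff {T : Finset ℕ} {j t : ℕ} (hj : 0 < j) (hjT : j ≤ #T) :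
    nthSmallest T j = t ↔ t ∈ T ∧ #{x ∈ T | x < t} + 1 = j := by
  have hlt (hf : {x | x ∈ T}.Finite) : j - 1 < #hf.toFinset := by
    simpa using Nat.sub_one_lt_of_le hj hjT
  rw [nthSmallest_eq_nth, card_filter_lt_eq_count]
  constructor
  · rintro rfl
    exact ⟨Nat.nth_mem _ hlt, by rw [Nat.count_nth hlt, Nat.sub_add_cancel hj]⟩
  · rintro ⟨ht, rfl⟩
    exact Nat.nth_count ht

section Statistics

variable {m n s r i k : ℕ} {S : Finset ℕ}

theorem card_filter_lt_add_card_sdiff_filter_lt {N t : ℕ} (hS : S ⊆ Icc 1 N) (ht : t ∈ Icc 1 N) :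
    #{x ∈ S | x < t} + #{x ∈ Icc 1 N \ S | x < t} + 1 = t := by
  obtain ⟨ht₁, htN⟩ := mem_Icc.mp ht
  rw [card_filter_add_card_sdiff_filter hS, filter_lt_Icc htN, Nat.card_Ico,
    Nat.sub_add_cancel ht₁]

theorem card_Icc_sdiff (hS : S ∈ (Icc 1 (m + n)).powersetCard n) : #(Icc 1 (m + n) \ S) = m := by
  obtain ⟨hsub, hcard⟩ := mem_powersetCard.mp hS
  simp [card_sdiff_of_subset hsub, hcard]

theorem Aexc_add_nthSmallest (hS : S ∈ (Icc 1 (m + n)).powersetCard n) (hs : s < m) :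
    Aexc m n s S + nthSmallest (Icc 1 (m + n) \ S) (m - s) = n + (m - s) := by
  obtain ⟨hsub, hcard⟩ := mem_powersetCard.mp hS
  unfold Aexc
  set X := nthSmallest (Icc 1 (m + n) \ S) (m - s) with hX
  obtain ⟨hXmem, hXrank⟩ :=
    (nthSmallest_eq_iff (by lia) (by rw [card_Icc_sdiff hS]; lia)).mp hX.symm
  obtain ⟨hXIcc, hXS⟩ := mem_sdiff.mp hXmem
  have hbelow := card_filter_lt_add_card_sdiff_filter_lt hsub hXIcc
  have htotal := card_filter_lt_add_card_filter_gt S X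
  rw [if_neg hXS] at htotal
  lia

theorem Bprec_add_succ (hS : S ∈ (Icc 1 (m + n)).powersetCard n) (hr : r < n) :
    Bprec m n r S + (r + 1) = nthSmallest S (r + 1) := by
  obtain ⟨hsub, hcard⟩ := mem_powersetCard.mp hS
  unfold Bprec
  set Y := nthSmallest S (r + 1) with hY
  obtain ⟨hYmem, hYrank⟩ := (nthSmallest_eq_iff (by lia) (by lia)).mp hY.symm
  have hbelow := card_filter_lt_add_card_sdiff_filter_lt hsub (hsub hYmem)
  lia

theorem Aexc_eq_iff (hS : S ∈ (Icc 1 (m + n)).powersetCard n) (hs : s < m) (hk : k ≤ n) :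
    Aexc m n s S = k ↔ m + n - s - k ∉ S ∧ #{x ∈ S | x < m + n - s - k} = n - k := by
  have hadd := Aexc_add_nthSmallest hS hs
  have hpIcc : m + n - s - k ∈ Icc 1 (m + n) := mem_Icc.mpr (by lia)
  have hbelow := card_filter_lt_add_card_sdiff_filter_lt (mem_powersetCard.mp hS).1 hpIcc
  calc Aexc m n s S = k
      ↔ nthSmallest (Icc 1 (m + n) \ S) (m - s) = m + n - s - k := by lia
    _ ↔ m + n - s - k ∈ Icc 1 (m + n) \ S ∧
          #{x ∈ Icc 1 (m + n) \ S | x < m + n - s - k} + 1 = m - s :=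
        nthSmallest_eq_iff (by lia) (by rw [card_Icc_sdiff hS]; lia)
    _ ↔ m + n - s - k ∉ S ∧ #{x ∈ S | x < m + n - s - k} = n - k := by
        rw [mem_sdiff, and_iff_right hpIcc]
        exact and_congr_right fun _ => by lia

theorem Bprec_eq_iff (hS : S ∈ (Icc 1 (m + n)).powersetCard n) (hr : r < n) :
    Bprec m n r S = i ↔ r + i + 1 ∈ S ∧ #{x ∈ S | x < r + i + 1} = r := by
  have hadd := Bprec_add_succ hS hr
  calc Bprec m n r S = i
      ↔ nthSmallest S (r + 1) = r + i + 1 := by lia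
    _ ↔ r + i + 1 ∈ S ∧ #{x ∈ S | x < r + i + 1} + 1 = r + 1 :=
        nthSmallest_eq_iff (by lia) (by rw [(mem_powersetCard.mp hS).2]; lia)
    _ ↔ r + i + 1 ∈ S ∧ #{x ∈ S | x < r + i + 1} = r := by rw [Nat.add_right_cancel_iff]

end Statistics

/-- Second case of Theorem 1: the null joint distribution of `(A_s, B_r)` for a uniformly
random `n`-element subset of `{1,…,m+n}`, in the range `m-s ≤ i ≤ m`, `n-r ≤ k ≤ n`.
Here `k+i-m-n+s+r` is written as `k+i+s+r - (m+n)` and `k-n+r` as `k+r-n` (both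
nonnegative in this range). -/
theorem sidak_joint_null_case2 (m n s r i k : ℕ) (hs : s < m) (hr : r < n)
    (hi₁ : m - s ≤ i) (hi₂ : i ≤ m) (hk₁ : n - r ≤ k) (hk₂ : k ≤ n) :
    ((((Finset.Icc 1 (m + n)).powersetCard n).filter
        (fun S => Aexc m n s S = k ∧ Bprec m n r S = i)).card : ℚ)
        / ((m + n).choose n : ℚ)
      = ((m + n - r - i - 1).choose (n - r - 1) * (m + n - s - k - 1).choose (m - s - 1)
            * ((k + i + s + r) - (m + n)).choose ((k + r) - n) : ℚ)
        / ((m + n).choose n : ℚ) := by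
  have hcount : #{S ∈ (Icc 1 (m + n)).powersetCard n | Aexc m n s S = k ∧ Bprec m n r S = i} =
      (m + n - s - k - 1).choose (n - k) *
        (r + i + 1 - (m + n - s - k) - 1).choose (r - (n - k)) *
          (m + n - (r + i + 1)).choose (n - r - 1) := by
    rw [filter_congr fun S hS => and_congr (Aexc_eq_iff hS hs hk₂) (Bprec_eq_iff hS hr)]
    exact card_powersetCard_Icc_filter_notMem_mem (by lia) (by lia) (by lia) (by lia) hr
  have hsymm : (m + n - s - k - 1).choose (n - k) = (m + n - s - k - 1).choose (m - s - 1) :=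
    Nat.choose_symm_of_eq_add (by lia)
  have hbetween : r + i + 1 - (m + n - s - k) - 1 = k + i + s + r - (m + n) := by lia
  have hchosen : r - (n - k) = k + r - n := by lia
  have habove : m + n - (r + i + 1) = m + n - r - i - 1 := by lia
  rw [hcount, hsymm, hbetween, hchosen, habove]
  push_cast
  ring
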